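/- arXiv:1111.0032 — 2 statements merged into one kernel-verified Lean document; each statement's English description precedes it below -/
import Mathlib

section
/- For every μ ∈ (0,1) there exists x with −μ < x < 1−μ such that f̂(x,0,0,0,0,0) = 0, i.e. (x,0,0,0,0,0) is an equilibrium of the CR3BP. (Existence of the collinear libration point 𝓛₁ between the two primaries.) -/
/-! On the segment between the primaries put `t = x + μ ∈ (0, 1)`, the distance to the Earth; the
distance to the Moon is `1 - t`. At rest on the axis only the fourth component of the field can be
nonzero, and it equals `t - μ - (1 - μ) / t ^ 2 + μ / (1 - t) ^ 2`. Multiplied by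
`t ^ 2 * (1 - t) ^ 2` this becomes a polynomial with value `-(1 - μ) < 0` at `t = 0` and `μ > 0` at
`t = 1`, so the intermediate value theorem gives a zero strictly inside.
-/

open Real Set

namespace CR3BP

/-- Distance to the Earth, located at `(-μ, 0, 0)`. -/
noncomputable def r1 (μ : ℝ) (p : Fin 6 → ℝ) : ℝ :=
  Real.sqrt ((p 0 + μ) ^ 2 + p 1 ^ 2 + p 2 ^ 2)

/-- Distance to the Moon, located at `(1-μ, 0, 0)`. -/
noncomputable def r2 (μ : ℝ) (p : Fin 6 → ℝ) : ℝ :=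
  Real.sqrt ((p 0 - 1 + μ) ^ 2 + p 1 ^ 2 + p 2 ^ 2)

/-- The CR3BP vector field `f̂` with mass ratio `μ`, acting on
`p = (x, y, z, vx, vy, vz)`. -/
noncomputable def fhat (μ : ℝ) (p : Fin 6 → ℝ) : Fin 6 → ℝ :=
  ![p 3, p 4, p 5,
    2 * p 4 + p 0 - (1 - μ) * (p 0 + μ) / r1 μ p ^ 3 - μ * (p 0 - 1 + μ) / r2 μ p ^ 3,
    -2 * p 3 + p 1 - (1 - μ) * p 1 / r1 μ p ^ 3 - μ * p 1 / r2 μ p ^ 3,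
    -(1 - μ) * p 2 / r1 μ p ^ 3 - μ * p 2 / r2 μ p ^ 3]

/-- The effective potential `U(x,y,z)`. -/
noncomputable def Ueff (μ x y z : ℝ) : ℝ :=
  -(x ^ 2 + y ^ 2) / 2 - (1 - μ) / Real.sqrt ((x + μ) ^ 2 + y ^ 2 + z ^ 2)
    - μ / Real.sqrt ((x - 1 + μ) ^ 2 + y ^ 2 + z ^ 2) - μ * (1 - μ) / 2

/-- The energy `E(p) = (vx² + vy² + vz²)/2 + U(x,y,z)`. -/
noncomputable def energy (μ : ℝ) (p : Fin 6 → ℝ) : ℝ :=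
  (p 3 ^ 2 + p 4 ^ 2 + p 5 ^ 2) / 2 + Ueff μ (p 0) (p 1) (p 2)

/-- Existence of a zero of the axial force balance with denominators cleared, where `t` is the
distance to the Earth. -/
lemma exists_axial_balance (μ : ℝ) (hμ0 : 0 < μ) (hμ1 : μ < 1) :
    ∃ t : ℝ, 0 < t ∧ t < 1 ∧
      (t - μ) * t ^ 2 * (1 - t) ^ 2 - (1 - μ) * (1 - t) ^ 2 + μ * t ^ 2 = 0 := by
  have hc : ContinuousOn (fun t : ℝ =>
      (t - μ) * t ^ 2 * (1 - t) ^ 2 - (1 - μ) * (1 - t) ^ 2 + μ * t ^ 2) (Icc 0 1) := by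
    fun_prop
  obtain ⟨t, ⟨h0, h1⟩, ht⟩ := intermediate_value_Ioo zero_le_one hc
    (show (0 : ℝ) ∈ Ioo _ _ by constructor <;> norm_num <;> linarith)
  exact ⟨t, h0, h1, ht⟩

/-- Existence of the collinear libration point `𝓛₁`, located on the
`x`-axis strictly between the Earth at `(-μ,0,0)` and the Moon at `(1-μ,0,0)`. -/
theorem exists_L1 (μ : ℝ) (hμ0 : 0 < μ) (hμ1 : μ < 1) :
    ∃ x : ℝ, -μ < x ∧ x < 1 - μ ∧ fhat μ ![x, 0, 0, 0, 0, 0] = 0 := by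
  obtain ⟨t, h0, h1, ht⟩ := exists_axial_balance μ hμ0 hμ1
  refine ⟨t - μ, by linarith, by linarith, ?_⟩
  have hr1 : r1 μ ![t - μ, 0, 0, 0, 0, 0] = t := by
    simp [r1, Real.sqrt_sq h0.le]
  have hr2 : r2 μ ![t - μ, 0, 0, 0, 0, 0] = 1 - t := by
    have h : (t - μ - 1 + μ) ^ 2 = (1 - t) ^ 2 := by ring
    simp [r2, h, Real.sqrt_sq (sub_nonneg.2 h1.le)]
  have ht0 : t ≠ 0 := h0.ne'
  have ht1 : 1 - t ≠ 0 := (sub_pos.2 h1).ne'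
  have key : t - μ - (1 - μ) * t / t ^ 3 - μ * (t - μ - 1 + μ) / (1 - t) ^ 3 = 0 := by
    have h : t - μ - (1 - μ) * t / t ^ 3 - μ * (t - μ - 1 + μ) / (1 - t) ^ 3
        = ((t - μ) * t ^ 2 * (1 - t) ^ 2 - (1 - μ) * (1 - t) ^ 2 + μ * t ^ 2)
          / (t ^ 2 * (1 - t) ^ 2) := by
      field_simp
      ring
    rw [h, ht, zero_div]
  unfold fhat
  rw [hr1, hr2]
  ext i
  fin_cases i <;> simp
  simpa using key

end CR3BP
end

section
/- Let μ ∈ (0,1) and let p = (x,y,z,0,0,0) ∈ ℝ⁶ with y ≠ 0, r₁ > 0 and r₂ > 0. Then f̂(p) = 0 if and only if z = 0, x = 1/2 − μ, and y² = 3/4 (equivalently r₁ = r₂ = 1). (The triangular libration points 𝓛₄ and 𝓛₅ are exactly the two points (1/2 − μ, ±√3/2, 0) with zero velocity.) -/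
/-!
At zero velocity only the three acceleration components matter. Write `a = r₁⁻³`, `b = r₂⁻³`.
As `y ≠ 0`, the `y`-component says that the convex combination `(1 - μ) a + μ b` equals `1`.
Subtracting `x` times this relation from the `x`-component leaves `μ (1 - μ) (a - b) = 0`, so
`a = b = 1` and both distances are `1`; the `z`-component becomes `-z = 0`. Intersecting the two
unit spheres about the primaries with the plane `z = 0` gives the two triangular points.
-/

open Real Set

namespace CR3BP

/-- Characterization of the triangular libration points `𝓛₄`, `𝓛₅`:
a zero-velocity point with `y ≠ 0` is an equilibrium iff `z = 0`, `x = 1/2 - μ`, and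
`y² = 3/4`. -/
theorem triangular_libration_points (μ : ℝ) (hμ0 : 0 < μ) (hμ1 : μ < 1)
    (x y z : ℝ) (hy : y ≠ 0)
    (hr1 : 0 < r1 μ ![x, y, z, 0, 0, 0]) (hr2 : 0 < r2 μ ![x, y, z, 0, 0, 0]) :
    fhat μ ![x, y, z, 0, 0, 0] = 0 ↔ z = 0 ∧ x = 1 / 2 - μ ∧ y ^ 2 = 3 / 4 := by
  have hρ1 : 0 < (x + μ) ^ 2 + y ^ 2 + z ^ 2 := by positivity
  have hρ2 : 0 < (x - 1 + μ) ^ 2 + y ^ 2 + z ^ 2 := by positivity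
  have e1 : r1 μ ![x, y, z, 0, 0, 0] ^ 2 = (x + μ) ^ 2 + y ^ 2 + z ^ 2 :=
    Real.sq_sqrt hρ1.le
  have e2 : r2 μ ![x, y, z, 0, 0, 0] ^ 2 = (x - 1 + μ) ^ 2 + y ^ 2 + z ^ 2 :=
    Real.sq_sqrt hρ2.le
  have hf : fhat μ ![x, y, z, 0, 0, 0] = ![0, 0, 0,
      2 * 0 + x - (1 - μ) * (x + μ) / r1 μ ![x, y, z, 0, 0, 0] ^ 3
        - μ * (x - 1 + μ) / r2 μ ![x, y, z, 0, 0, 0] ^ 3,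
      -2 * 0 + y - (1 - μ) * y / r1 μ ![x, y, z, 0, 0, 0] ^ 3
        - μ * y / r2 μ ![x, y, z, 0, 0, 0] ^ 3,
      -(1 - μ) * z / r1 μ ![x, y, z, 0, 0, 0] ^ 3
        - μ * z / r2 μ ![x, y, z, 0, 0, 0] ^ 3] := rfl
  rw [hf]
  generalize r1 μ ![x, y, z, 0, 0, 0] = r at *
  generalize r2 μ ![x, y, z, 0, 0, 0] = s at *
  constructor
  · intro h
    have hX := congrFun h 3
    have hY := congrFun h 4
    have hZ := congrFun h 5
    simp only [Matrix.cons_val, Pi.zero_apply, div_eq_mul_inv] at hX hY hZ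
    have hS : (1 - μ) * (r ^ 3)⁻¹ + μ * (s ^ 3)⁻¹ = 1 :=
      mul_left_cancel₀ hy (by linear_combination -hY)
    have hz : z = 0 := by linear_combination -hZ - z * hS
    have hab : (r ^ 3)⁻¹ = (s ^ 3)⁻¹ := by
      have hc : (1 - μ) * μ ≠ 0 := (mul_pos (sub_pos.2 hμ1) hμ0).ne'
      exact mul_left_cancel₀ hc (by linear_combination -hX - x * hS)
    have ha : (r ^ 3)⁻¹ = 1 := by linear_combination hS + μ * hab
    have hb : (s ^ 3)⁻¹ = 1 := hab ▸ ha
    have hr : r = 1 := (pow_eq_one_iff_of_nonneg hr1.le three_ne_zero).1 (inv_eq_one.1 ha)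
    have hs : s = 1 := (pow_eq_one_iff_of_nonneg hr2.le three_ne_zero).1 (inv_eq_one.1 hb)
    subst hr hs hz
    have hx : x = 1 / 2 - μ := by linear_combination (e2 - e1) / 2
    subst hx
    exact ⟨rfl, rfl, by linear_combination -e1⟩
  · rintro ⟨rfl, rfl, hy2⟩
    have hr : r = 1 := (pow_eq_one_iff_of_nonneg hr1.le two_ne_zero).1 (by
      linear_combination e1 + hy2)
    have hs : s = 1 := (pow_eq_one_iff_of_nonneg hr2.le two_ne_zero).1 (by
      linear_combination e2 + hy2)
    subst hr hs
    ext i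
    fin_cases i <;> simp <;> ring

end CR3BP
end
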